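/- arXiv:2306.00967 — 5 statements merged into one kernel-verified Lean document; each statement's English description precedes it below -/
import Mathlib

section
/- Let u : ℝ → ℝ be twice continuously differentiable with u″(x) > 0 for every x ∈ ℝ. Let ν be a compactly supported probability measure on ℝ satisfying the Schwinger–Dyson equation for the potential u, and let μ = (u′)_♯ν be the pushforward of ν by u′. Assume μ is absolutely continuous with respect to Lebesgue measure and compactly supported. Then the function A(x,y) = (x−y)/((u′)⁻¹(x) − (u′)⁻¹(y)) for x ≠ y (extended on the diagonal by 1/(u″((u′)⁻¹(x))) ... the diagonal is μ⊗μ-negligible) is a free Stein kernel for μ relative to the standard semicircular potential; that is, for every continuously differentiable g : ℝ → ℝ one has ∫ x·g(x) dμ(x) = ∫∫ A(x,y)·((g(x)−g(y))/(x−y)) dμ(x) dμ(y). -/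
open MeasureTheory

/-- Divided quotient of a function `f`: `(f x − f y)/(x − y)` off the diagonal, extended by
`f′(x)` on the diagonal. -/
noncomputable def dq (f : ℝ → ℝ) (x y : ℝ) : ℝ :=
  if x = y then deriv f x else (f x - f y) / (x - y)

/-!
Applied to `g ∘ u′`, the Schwinger–Dyson equation reads
`∫ u′ · (g ∘ u′) dν = ∬ dq (g ∘ u′) dν dν`. Off the diagonal the chain rule for divided
differences is the factorisation

`dq (g ∘ u′) x y = (u′ x − u′ y) / (x − y) * dq g (u′ x) (u′ y)`,

whose first factor is the kernel at `(u′ x, u′ y)`, so pushing both sides forward by `u′` gives the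
Stein identity. On the diagonal the factorisation may fail, but there it is harmless since `ν` has
no atoms: an increasing `f` with `f′ a = 1` and `|f| ≤ ε` gives
`ν {a} ^ 2 ≤ ∬ dq f dν dν = ∫ u′ f dν ≤ ε ∫ |u′| dν`.
-/

/-- The Schwinger–Dyson equation with potential `u`, tested against all `C¹` functions. For a
compactly supported probability measure `ν` it says that `ν` is the free Gibbs measure with
potential `u`. -/
def SatisfiesSchwingerDyson (u : ℝ → ℝ) (ν : Measure ℝ) : Prop :=
  ∀ f : ℝ → ℝ, ContDiff ℝ 1 f → ∫ x, deriv u x * f x ∂ν = ∫ x, ∫ y, dq f x y ∂ν ∂ν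

/-- `A` is a free Stein kernel for `μ` relative to the standard semicircular potential
`x ↦ x² / 2`, tested against all `C¹` functions. -/
def IsFreeSteinKernel (A : ℝ → ℝ → ℝ) (μ : Measure ℝ) : Prop :=
  ∀ g : ℝ → ℝ, ContDiff ℝ 1 g → ∫ x, x * g x ∂μ = ∫ x, ∫ y, A x y * dq g x y ∂μ ∂μ

/-- The kernel `(x - y) / (T⁻¹ x - T⁻¹ y)` attached to a moment map `T`, with a prescribed value
`d x` at the diagonal point `(x, x)`. The inverse is `Function.invFun T`, which is arbitrary outside
the range of `T`. -/
noncomputable def momentMapKernel (T d : ℝ → ℝ) (x y : ℝ) : ℝ :=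
  if x = y then d x else (x - y) / (Function.invFun T x - Function.invFun T y)

section DividedDifference

open scoped NNReal

variable {f : ℝ → ℝ}

lemma dq_nonneg (hf : Monotone f) (x y : ℝ) : 0 ≤ dq f x y := by
  unfold dq
  split_ifs
  · exact hf.deriv_nonneg
  · rw [← slope_def_field]
    exact (hf.monotoneOn Set.univ).slope_nonneg (Set.mem_univ y) (Set.mem_univ x)

lemma norm_dq_le {C : ℝ≥0} (hf : LipschitzWith C f) (x y : ℝ) : ‖dq f x y‖ ≤ C := by
  unfold dq
  split_ifs with hxy
  · exact norm_deriv_le_of_lipschitz hf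
  · rw [norm_div, div_le_iff₀ (norm_sub_pos_iff.2 hxy)]
    exact hf.norm_sub_le x y

lemma measurable_uncurry_dq (hf : Measurable f) : Measurable (Function.uncurry (dq f)) := by
  refine Measurable.ite measurableSet_diagonal ((measurable_deriv f).comp measurable_fst) ?_
  fun_prop

lemma integrable_uncurry_dq {C : ℝ≥0} (hf : LipschitzWith C f) (ρ : Measure (ℝ × ℝ))
    [IsFiniteMeasure ρ] : Integrable (Function.uncurry (dq f)) ρ :=
  .of_bound (measurable_uncurry_dq hf.continuous.measurable).aestronglyMeasurable C
    (.of_forall fun p => norm_dq_le hf p.1 p.2)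

lemma deriv_mul_measureReal_singleton_sq_le_integral_dq {C : ℝ≥0} (hmono : Monotone f)
    (hlip : LipschitzWith C f) (ν : Measure ℝ) [IsFiniteMeasure ν] (a : ℝ) :
    deriv f a * ν.real {a} ^ 2 ≤ ∫ x, ∫ y, dq f x y ∂ν ∂ν := by
  have hint := integrable_uncurry_dq hlip (ν.prod ν)
  calc deriv f a * ν.real {a} ^ 2
      = ∫ p in {(a, a)}, Function.uncurry (dq f) p ∂ν.prod ν := by
        rw [integral_singleton, ← Set.singleton_prod_singleton, measureReal_prod_prod]
        simp [dq, sq, mul_comm]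
    _ ≤ ∫ p, Function.uncurry (dq f) p ∂ν.prod ν :=
        setIntegral_le_integral hint (.of_forall fun p => dq_nonneg hmono p.1 p.2)
    _ = ∫ x, ∫ y, dq f x y ∂ν ∂ν := integral_prod _ hint

end DividedDifference

section Atoms

open Real Filter Topology

lemma exists_contDiff_monotone_lipschitzWith_deriv_eq_one_abs_le (a : ℝ) {ε : ℝ} (hε : 0 < ε) :
    ∃ f : ℝ → ℝ, ContDiff ℝ 1 f ∧ Monotone f ∧ LipschitzWith 1 f ∧ deriv f a = 1 ∧
      ∀ x, |f x| ≤ ε := by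
  obtain ⟨δ, hδ, hδε⟩ : ∃ δ, 0 < δ ∧ δ * (π / 2) = ε :=
    ⟨ε / (π / 2), by positivity, div_mul_cancel₀ _ (by positivity)⟩
  set f : ℝ → ℝ := fun x => δ * arctan ((x - a) / δ)
  have hderiv (x : ℝ) : HasDerivAt f (1 / (1 + ((x - a) / δ) ^ 2)) x :=
    ((((hasDerivAt_id' x).sub_const a).div_const δ).arctan.const_mul δ).congr_deriv
      (by field_simp)
  refine ⟨f, ?contDiff, ?mono, ?lipschitz, by simp [(hderiv a).deriv], fun x => ?bound⟩
  case contDiff => exact contDiff_const.mul (((contDiff_id.sub contDiff_const).div_const δ).arctan)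
  case mono =>
    refine monotone_of_deriv_nonneg (fun x => (hderiv x).differentiableAt) fun x => ?_
    rw [(hderiv x).deriv]
    positivity
  case lipschitz =>
    refine lipschitzWith_of_nnnorm_deriv_le (fun x => (hderiv x).differentiableAt) fun x => ?_
    rw [(hderiv x).deriv, ← NNReal.coe_le_coe, coe_nnnorm, norm_of_nonneg (by positivity)]
    exact div_le_one_of_le₀ (by simpa using sq_nonneg _) (by positivity)
  case bound =>
    have harctan : |arctan ((x - a) / δ)| ≤ π / 2 :=
      abs_le.2 ⟨(neg_pi_div_two_lt_arctan _).le, (arctan_lt_pi_div_two _).le⟩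
    rw [abs_mul, abs_of_pos hδ, ← hδε]
    gcongr

lemma integrable_of_continuous_of_measure_compl_eq_zero {X E : Type*} [TopologicalSpace X]
    [T2Space X] [MeasurableSpace X] [OpensMeasurableSpace X] [NormedAddCommGroup E] {f : X → E}
    (hf : Continuous f) {ν : Measure X} [IsFiniteMeasureOnCompacts ν] {K : Set X}
    (hK : IsCompact K) (hνK : ν Kᶜ = 0) : Integrable f ν := by
  rw [← Measure.restrict_eq_self_of_ae_mem (mem_ae_iff.2 hνK)]
  exact hf.continuousOn.integrableOn_compact hK

lemma SatisfiesSchwingerDyson.nullSingletonClass {u : ℝ → ℝ} {ν : Measure ℝ} [IsFiniteMeasure ν]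
    (hν : SatisfiesSchwingerDyson u ν) (hu : Integrable (deriv u) ν) : NullSingletonClass ν := by
  refine ⟨fun a => ?_⟩
  have hbound (ε : ℝ) (hε : 0 < ε) : ν.real {a} ^ 2 ≤ ε * ∫ x, |deriv u x| ∂ν := by
    obtain ⟨f, hf, hmono, hlip, hderiv, habs⟩ :=
      exists_contDiff_monotone_lipschitzWith_deriv_eq_one_abs_le a hε
    calc ν.real {a} ^ 2
        ≤ ∫ x, ∫ y, dq f x y ∂ν ∂ν := by
          simpa [hderiv] using deriv_mul_measureReal_singleton_sq_le_integral_dq hmono hlip ν a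
      _ = ∫ x, deriv u x * f x ∂ν := (hν f hf).symm
      _ ≤ ∫ x, ε * |deriv u x| ∂ν := by
          refine (le_norm_self _).trans <| norm_integral_le_of_norm_le (hu.abs.const_mul ε) <|
            .of_forall fun x => ?_
          rw [norm_mul, mul_comm]
          exact mul_le_mul_of_nonneg_right (habs x) (norm_nonneg _)
      _ = ε * ∫ x, |deriv u x| ∂ν := integral_const_mul _ _
  have hlim : Tendsto (fun ε : ℝ => ε * ∫ x, |deriv u x| ∂ν) (𝓝[>] 0) (𝓝 0) :=
    ((continuous_mul_const _).tendsto' 0 0 (zero_mul _)).mono_left nhdsWithin_le_nhds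
  have hsq : ν.real {a} ^ 2 ≤ 0 :=
    ge_of_tendsto hlim (eventually_nhdsWithin_of_forall hbound)
  exact (measureReal_eq_zero_iff).1 ((sq_nonpos_iff _).1 hsq)

end Atoms

section Pushforward

variable {T : ℝ → ℝ}

lemma momentMapKernel_mul_dq (hT : Function.Injective T) (d g : ℝ → ℝ) {x y : ℝ} (hxy : x ≠ y) :
    momentMapKernel T d (T x) (T y) * dq g (T x) (T y) = dq (g ∘ T) x y := by
  have hTxy : T x - T y ≠ 0 := sub_ne_zero.2 (hT.ne hxy)
  simp only [momentMapKernel, dq, if_neg hxy, if_neg (hT.ne hxy), Function.leftInverse_invFun hT _,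
    Function.comp_apply]
  field_simp

lemma integral_momentMapKernel_mul_dq_map (hT : MeasurableEmbedding T) (d g : ℝ → ℝ)
    (ν : Measure ℝ) [NullSingletonClass ν] :
    ∫ x, ∫ y, momentMapKernel T d x y * dq g x y ∂ν.map T ∂ν.map T =
      ∫ x, ∫ y, dq (g ∘ T) x y ∂ν ∂ν := by
  simp only [hT.integral_map]
  refine integral_congr_ae (.of_forall fun x => integral_congr_ae ?_)
  filter_upwards [Measure.ae_ne ν x] with y hyx
  exact momentMapKernel_mul_dq hT.injective d g hyx.symm

end Pushforward

theorem moment_map_free_stein_kernel_general {u : ℝ → ℝ} (hu : ContDiff ℝ 2 u)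
    (hinj : Function.Injective (deriv u)) {ν : Measure ℝ} [IsFiniteMeasure ν]
    {K : Set ℝ} (hK : IsCompact K) (hνK : ν Kᶜ = 0) (hν : SatisfiesSchwingerDyson u ν) (d : ℝ → ℝ) :
    IsFreeSteinKernel (momentMapKernel (deriv u) d) (ν.map (deriv u)) := by
  intro g hg
  have hT : ContDiff ℝ 1 (deriv u) := hu.deriv'
  have hemb : MeasurableEmbedding (deriv u) := hT.continuous.measurableEmbedding hinj
  have : NullSingletonClass ν :=
    hν.nullSingletonClass (integrable_of_continuous_of_measure_compl_eq_zero hT.continuous hK hνK)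
  calc ∫ x, x * g x ∂ν.map (deriv u)
      = ∫ x, deriv u x * (g ∘ deriv u) x ∂ν := hemb.integral_map _
    _ = ∫ x, ∫ y, dq (g ∘ deriv u) x y ∂ν ∂ν := hν _ (hg.comp hT)
    _ = ∫ x, ∫ y, momentMapKernel (deriv u) d x y * dq g x y ∂ν.map (deriv u) ∂ν.map (deriv u) :=
        (integral_momentMapKernel_mul_dq_map hemb d g ν).symm

/-- The moment-map free Stein kernel: if `ν` is a compactly supported probability measure
satisfying the Schwinger–Dyson equation for a `C²` potential `u` with `u″ > 0`, and
`μ = (u′)_♯ν` is absolutely continuous and compactly supported, then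
`A(x,y) = (x−y)/((u′)⁻¹(x) − (u′)⁻¹(y))` (extended on the negligible diagonal by
`1/u″((u′)⁻¹(x))`) is a free Stein kernel for `μ` relative to the standard semicircular
potential: `∫ x·g(x) dμ = ∫∫ A(x,y)·dq g(x,y) dμ dμ` for every `C¹` function `g`. -/
theorem moment_map_free_stein_kernel (u : ℝ → ℝ) (hu : ContDiff ℝ 2 u)
    (hu'' : ∀ x, 0 < deriv (deriv u) x)
    (ν : Measure ℝ) [IsProbabilityMeasure ν]
    (hνc : ∃ K : Set ℝ, IsCompact K ∧ ν Kᶜ = 0)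
    (hSD : ∀ f : ℝ → ℝ, ContDiff ℝ 1 f →
      ∫ x, deriv u x * f x ∂ν = ∫ x, ∫ y, dq f x y ∂ν ∂ν)
    (μ : Measure ℝ) (hμ : μ = ν.map (deriv u))
    (hac : μ ≪ volume) (hμc : ∃ K : Set ℝ, IsCompact K ∧ μ Kᶜ = 0) :
    ∀ g : ℝ → ℝ, ContDiff ℝ 1 g →
      ∫ x, x * g x ∂μ =
        ∫ x, ∫ y,
          (if x = y then 1 / deriv (deriv u) (Function.invFun (deriv u) x)
            else (x - y) / (Function.invFun (deriv u) x - Function.invFun (deriv u) y)) *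
          dq g x y ∂μ ∂μ := by
  subst hμ
  obtain ⟨K, hK, hνK⟩ := hνc
  exact moment_map_free_stein_kernel_general hu (strictMono_of_deriv_pos hu'').injective hK hνK hSD
    fun x => 1 / deriv (deriv u) (Function.invFun (deriv u) x)
end

section
/- Let u : ℝ → ℝ be twice continuously differentiable with u″(x) > 0 for every x ∈ ℝ. Let ν be a compactly supported probability measure on ℝ satisfying the Schwinger–Dyson equation for the potential u, and let μ = (u′)_♯ν be the pushforward of ν by u′, assumed absolutely continuous with respect to Lebesgue measure and compactly supported. Then ∫∫ ((x−y)/((u′)⁻¹(x) − (u′)⁻¹(y)) − 1)² dμ(x) dμ(y) ≤ ∫∫ ((u′(x)−u′(y))/(x−y) − 1)² dν(x) dν(y); i.e., the squared deviation of the moment-map Stein kernel of μ from the constant 1 is bounded by the mean-square deviation of the difference quotient of u′ from 1 under ν⊗ν. -/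
open MeasureTheory

/-! Substituting `x = u' s`, `y = u' t` turns `(x - y) / ((u')⁻¹ x - (u')⁻¹ y)` into
`(u' s - u' t) / (s - t)`, so the two sides have the same integrand off the diagonal. On the
diagonal the prescribed values `1 / u''` and `u''` are reciprocal to each other rather than equal,
but the diagonal does not count: `ν` has no atoms, since `μ` would inherit them. -/

section GeneralMeasures

variable {α β γ δ E : Type*} [MeasurableSpace α] [MeasurableSpace β] [MeasurableSpace γ]
  [MeasurableSpace δ] [NormedAddCommGroup E] [NormedSpace ℝ E]

theorem nullSingletonClass_of_map_absolutelyContinuous {μ : Measure α} {ρ : Measure β}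
    [NullSingletonClass ρ] {f : α → β} (hf : AEMeasurable f μ) (hac : μ.map f ≪ ρ) :
    NullSingletonClass μ where
  measure_singleton a :=
    have h_fiber : μ (f ⁻¹' {f a}) = 0 :=
      Measure.preimage_null_of_map_null hf (hac (measure_singleton (f a)))
    measure_mono_null (Set.singleton_subset_iff.mpr (Set.mem_singleton (f a))) h_fiber

theorem integral_integral_map {f : α → β} {g : γ → δ} (hf : MeasurableEmbedding f)
    (hg : MeasurableEmbedding g) (μ : Measure α) (ν : Measure γ) (F : β → δ → E) :
    ∫ x, ∫ y, F x y ∂ν.map g ∂μ.map f = ∫ a, ∫ c, F (f a) (g c) ∂ν ∂μ := by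
  simp only [hf.integral_map, hg.integral_map]

theorem integral_integral_congr_off_diagonal (μ ν : Measure α) [NullSingletonClass ν]
    {F G : α → α → E} (h : ∀ x y, x ≠ y → F x y = G x y) :
    ∫ x, ∫ y, F x y ∂ν ∂μ = ∫ x, ∫ y, G x y ∂ν ∂μ := by
  refine integral_congr_ae (.of_forall fun x => integral_congr_ae ?_)
  filter_upwards [ν.ae_ne x] with y hy
  exact h x y hy.symm

end GeneralMeasures

/-- The moment-map Stein kernel `(x - y) / (g⁻¹ x - g⁻¹ y)` attached to an injective map `g`, which
is `u'` when the potential is `u`. The inverse is `Function.invFun g`, arbitrary outside the range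
of `g`. The diagonal value `1 / g' (g⁻¹ x)` is not the limiting value `g' (g⁻¹ x)` of the
quotient. -/
noncomputable def momentMapSteinKernel (g : ℝ → ℝ) (x y : ℝ) : ℝ :=
  if x = y then 1 / deriv g (Function.invFun g x)
  else (x - y) / (Function.invFun g x - Function.invFun g y)

theorem momentMapSteinKernel_apply_of_ne {g : ℝ → ℝ} (hg : Function.Injective g) {s t : ℝ}
    (hst : s ≠ t) : momentMapSteinKernel g (g s) (g t) = dq g s t := by
  simp only [momentMapSteinKernel, dq, hg.eq_iff, if_neg hst, Function.leftInverse_invFun hg _]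

theorem moment_map_stein_discrepancy_bound_general {g : ℝ → ℝ} (hg : Measurable g)
    (hinj : Function.Injective g) (ν : Measure ℝ) [NullSingletonClass ν] :
    ∫ x, ∫ y, (momentMapSteinKernel g x y - 1) ^ 2 ∂ν.map g ∂ν.map g =
      ∫ s, ∫ t, (dq g s t - 1) ^ 2 ∂ν ∂ν := by
  have hemb : MeasurableEmbedding g := hg.measurableEmbedding hinj
  calc ∫ x, ∫ y, (momentMapSteinKernel g x y - 1) ^ 2 ∂ν.map g ∂ν.map g
    _ = ∫ s, ∫ t, (momentMapSteinKernel g (g s) (g t) - 1) ^ 2 ∂ν ∂ν :=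
      integral_integral_map hemb hemb ν ν _
    _ = ∫ s, ∫ t, (dq g s t - 1) ^ 2 ∂ν ∂ν :=
      integral_integral_congr_off_diagonal ν ν fun s t hst => by
        rw [momentMapSteinKernel_apply_of_ne hinj hst]

/-- If `ν` is a compactly supported probability measure satisfying the Schwinger–Dyson equation
for a `C²` potential `u` with `u″ > 0`, and `μ = (u′)_♯ν` is absolutely continuous and compactly
supported, then the squared deviation of the moment-map Stein kernel of `μ` from `1` is bounded
by the mean-square deviation of the difference quotient of `u′` from `1` under `ν⊗ν`:
`∫∫ ((x−y)/((u′)⁻¹(x)−(u′)⁻¹(y)) − 1)² dμ dμ ≤ ∫∫ ((u′(x)−u′(y))/(x−y) − 1)² dν dν`. -/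
theorem moment_map_stein_discrepancy_bound (u : ℝ → ℝ) (hu : ContDiff ℝ 2 u)
    (hu'' : ∀ x, 0 < deriv (deriv u) x)
    (ν : Measure ℝ) [IsProbabilityMeasure ν]
    (hνc : ∃ K : Set ℝ, IsCompact K ∧ ν Kᶜ = 0)
    (hSD : ∀ f : ℝ → ℝ, ContDiff ℝ 1 f →
      ∫ x, deriv u x * f x ∂ν = ∫ x, ∫ y, dq f x y ∂ν ∂ν)
    (μ : Measure ℝ) (hμ : μ = ν.map (deriv u))
    (hac : μ ≪ volume) (hμc : ∃ K : Set ℝ, IsCompact K ∧ μ Kᶜ = 0) :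
    ∫ x, ∫ y,
        ((if x = y then 1 / deriv (deriv u) (Function.invFun (deriv u) x)
          else (x - y) / (Function.invFun (deriv u) x - Function.invFun (deriv u) y)) - 1) ^ 2
        ∂μ ∂μ ≤
      ∫ x, ∫ y, (dq (deriv u) x y - 1) ^ 2 ∂ν ∂ν := by
  subst hμ
  have : NullSingletonClass ν :=
    nullSingletonClass_of_map_absolutelyContinuous (measurable_deriv u).aemeasurable hac
  exact (moment_map_stein_discrepancy_bound_general (measurable_deriv u)
    (strictMono_of_deriv_pos hu'').injective ν).le
end

section
/- Let μ be a compactly supported probability measure on ℝ. Then μ is the standard semicircle law S(0,1) if and only if for every integer n ≥ 1 and every real polynomial p one has ∫ U_n(x)·p(x) dμ(x) = ∫∫ U_{n−1}(x)·(p(x)−p(y))/(x−y) dμ(x) dμ(y), where (p(x)−p(y))/(x−y) denotes the first divided difference of p, which is a polynomial function on ℝ². -/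
open MeasureTheory

/-- The semicircular distribution of variance `v`: the measure on `ℝ` with density
`x ↦ √(4v − x²) / (2πv)`.  `semicircle 1` is the standard semicircle law `S(0,1)`. -/
noncomputable def semicircle (v : ℝ) : Measure ℝ :=
  volume.withDensity fun x => ENNReal.ofReal (Real.sqrt (4 * v - x ^ 2) / (2 * Real.pi * v))

/-- The free Chebyshev polynomials (second kind, rescaled to `[−2,2]`). -/
noncomputable def chebU : ℕ → ℝ → ℝ
  | 0, _ => 1
  | 1, x => x
  | (n + 2), x => x * chebU (n + 1) x - chebU n x

/-- `Δᵏ[x^m](x₀,…,x_k) = Σ_{a₀+⋯+a_k = m−k} x₀^{a₀}⋯x_k^{a_k}` (zero when `m < k`). -/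
noncomputable def divDiffMonomial (k m : ℕ) (x : Fin (k + 1) → ℝ) : ℝ :=
  if k ≤ m then
    ∑ a ∈ Finset.Nat.antidiagonalTuple (k + 1) (m - k), ∏ i, x i ^ a i
  else 0

/-- The `k`-th divided difference `Δᵏp` of a real polynomial `p`, extended to a polynomial
function on `ℝ^{k+1}`. -/
noncomputable def divDiff (k : ℕ) (p : Polynomial ℝ) (x : Fin (k + 1) → ℝ) : ℝ :=
  ∑ m ∈ Finset.range (p.natDegree + 1), p.coeff m * divDiffMonomial k m x

/-!
Both directions rest on the functions `U_n` being orthonormal for the semicircle law.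

Since `Δ¹U_{m+1}(x, y) = ∑_{i+j=m} U_i(x) U_j(y)`, integrating out `y` against the semicircle law
leaves `U_m(x)`. For `p = U_{m+1}` the identity is therefore orthonormality on both sides, and every
polynomial is a combination of the `U_m`.

Conversely, `p = 1` gives `∫ U_n dμ = 0` for `n ≥ 1`, so `μ` has the moments of the semicircle law.
Their growth confines `μ` to a bounded interval, where the moment generating function is entire and
hence determined by the moments.
-/

open Polynomial Real

section ChebyshevS

open Polynomial.Chebyshev

theorem span_range_chebyshevS (R : Type*) [CommRing R] :
    Submodule.span R (Set.range fun n : ℕ => S R n) = ⊤ := by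
  set V := Submodule.span R (Set.range fun n : ℕ => S R n)
  have S_mem (n : ℕ) : S R n ∈ V := Submodule.subset_span ⟨n, rfl⟩
  have X_mul_mem : V.map (LinearMap.mulLeft R X) ≤ V := by
    rw [Submodule.map_span_le]
    rintro _ ⟨n, rfl⟩
    have recurrence : X * S R n = S R (n + 1) + S R (n - 1) := by rw [S_add_one]; ring
    rw [LinearMap.mulLeft_apply, recurrence]
    refine add_mem (S_mem (n + 1)) ?_
    cases n with
    | zero => simp
    | succ k => simpa using S_mem k
  have X_pow_mem (m : ℕ) : X ^ m ∈ V := by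
    induction m with
    | zero => simpa using S_mem 0
    | succ m ih => exact pow_succ' (X : R[X]) m ▸ X_mul_mem (Submodule.mem_map_of_mem ih)
  refine Submodule.eq_top_iff'.2 fun p => ?_
  rw [p.as_sum_range_C_mul_X_pow]
  exact Submodule.sum_mem _ fun i _ => smul_eq_C_mul (p.coeff i) ▸ V.smul_mem _ (X_pow_mem i)

theorem chebyshevS_induction {R : Type*} [CommRing R] {motive : R[X] → Prop}
    (chebyshev : ∀ n : ℕ, motive (S R n))
    (add : ∀ p q, motive p → motive q → motive (p + q))
    (smul : ∀ (c : R) p, motive p → motive (c • p)) (p : R[X]) : motive p := by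
  have hp : p ∈ Submodule.span R (Set.range fun n : ℕ => S R n) := by
    simp [span_range_chebyshevS]
  induction hp using Submodule.span_induction with
  | mem q hq => obtain ⟨n, rfl⟩ := hq; exact chebyshev n
  | zero => simpa using smul 0 1 (by simpa using chebyshev 0)
  | add p q _ _ hp hq => exact add p q hp hq
  | smul c p _ hp => exact smul c p hp

theorem chebU_eq_eval_chebyshevS (n : ℕ) (x : ℝ) : chebU n x = (S ℝ n).eval x := by
  induction n using Nat.twoStepInduction with
  | zero => simp [chebU]
  | one => simp [chebU]
  | more n h₀ h₁ => simp [chebU, h₀, h₁, S_add_two]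

theorem continuous_chebU (n : ℕ) : Continuous (chebU n) := by
  simp only [funext (chebU_eq_eval_chebyshevS n), Polynomial.continuous]

theorem chebU_two_mul_cos_mul_sin (n : ℕ) (t : ℝ) :
    chebU n (2 * cos t) * sin t = sin ((n + 1) * t) := by
  simp [chebU_eq_eval_chebyshevS]

end ChebyshevS

section DivDiff

open Finset.HasAntidiagonal (antidiagonal)

theorem continuous_divDiff (k : ℕ) (p : ℝ[X]) : Continuous (divDiff k p) := by
  unfold divDiff divDiffMonomial
  refine continuous_finsetSum _ fun m _ => continuous_const.mul ?_
  split_ifs <;> fun_prop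

theorem divDiff_eq_sum (k : ℕ) (p : ℝ[X]) (x : Fin (k + 1) → ℝ) :
    divDiff k p x = p.sum fun m c => c * divDiffMonomial k m x :=
  (p.sum_over_range (f := fun m c => c * divDiffMonomial k m x) fun _ => zero_mul _).symm

theorem divDiff_add (k : ℕ) (p q : ℝ[X]) (x : Fin (k + 1) → ℝ) :
    divDiff k (p + q) x = divDiff k p x + divDiff k q x := by
  simp only [divDiff_eq_sum]
  exact sum_add_index p q _ (fun _ => zero_mul _) fun _ _ _ => add_mul _ _ _

theorem divDiff_smul (k : ℕ) (c : ℝ) (p : ℝ[X]) (x : Fin (k + 1) → ℝ) :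
    divDiff k (c • p) x = c * divDiff k p x := by
  simp only [divDiff_eq_sum]
  rw [sum_smul_index _ _ _ fun _ => zero_mul _, sum_def, sum_def, Finset.mul_sum]
  exact Finset.sum_congr rfl fun _ _ => mul_assoc _ _ _

theorem divDiff_monomial (k m : ℕ) (c : ℝ) (x : Fin (k + 1) → ℝ) :
    divDiff k (monomial m c) x = c * divDiffMonomial k m x := by
  rw [divDiff_eq_sum, sum_monomial_index c _ (by simp)]

theorem divDiffMonomial_one_succ (m : ℕ) (x y : ℝ) :
    divDiffMonomial 1 (m + 1) ![x, y] = x * divDiffMonomial 1 m ![x, y] + y ^ m := by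
  cases m with
  | zero => simp [divDiffMonomial, Finset.Nat.antidiagonalTuple_two]
  | succ m =>
    simp [divDiffMonomial, Finset.Nat.antidiagonalTuple_two, Finset.Nat.sum_antidiagonal_succ,
      Finset.mul_sum, pow_succ', mul_assoc, add_comm]

theorem divDiff_one_X_mul (p : ℝ[X]) (x y : ℝ) :
    divDiff 1 (X * p) ![x, y] = x * divDiff 1 p ![x, y] + p.eval y := by
  induction p using Polynomial.induction_on' with
  | add p q hp hq => rw [mul_add, divDiff_add, divDiff_add, hp, hq, eval_add]; ring
  | monomial m c =>
    rw [X_mul_monomial, divDiff_monomial, divDiff_monomial, divDiffMonomial_one_succ,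
      eval_monomial]
    ring

theorem divDiff_one_one (x y : ℝ) : divDiff 1 1 ![x, y] = 0 := by
  rw [← monomial_zero_one, divDiff_monomial]
  simp [divDiffMonomial]

theorem sum_antidiagonal_chebU_mul_add_two (m : ℕ) (x y : ℝ) :
    ∑ a ∈ antidiagonal (m + 2), chebU a.1 x * chebU a.2 y =
      x * ∑ a ∈ antidiagonal (m + 1), chebU a.1 x * chebU a.2 y + chebU (m + 2) y
        - ∑ a ∈ antidiagonal m, chebU a.1 x * chebU a.2 y := by
  simp only [Finset.Nat.sum_antidiagonal_succ, chebU, sub_mul, Finset.sum_sub_distrib, mul_add,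
    Finset.mul_sum, mul_assoc]
  ring

theorem divDiff_one_chebyshevS_succ (m : ℕ) (x y : ℝ) :
    divDiff 1 (Chebyshev.S ℝ (m + 1)) ![x, y] =
      ∑ a ∈ antidiagonal m, chebU a.1 x * chebU a.2 y := by
  have divDiff_X : divDiff 1 X ![x, y] = 1 := by
    simpa [divDiff_one_one] using divDiff_one_X_mul 1 x y
  have recurrence (n : ℕ) : divDiff 1 (Chebyshev.S ℝ (n + 2)) ![x, y] =
      x * divDiff 1 (Chebyshev.S ℝ (n + 1)) ![x, y] + chebU (n + 1) y
        - divDiff 1 (Chebyshev.S ℝ n) ![x, y] := by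
    have h : Chebyshev.S ℝ (n + 2) + Chebyshev.S ℝ n = X * Chebyshev.S ℝ (n + 1) := by
      rw [Chebyshev.S_add_two]; ring
    rw [eq_sub_iff_add_eq, ← divDiff_add, h, divDiff_one_X_mul, chebU_eq_eval_chebyshevS]
    norm_cast
  induction m using Nat.twoStepInduction with
  | zero => simp [divDiff_X, chebU]
  | one =>
    have h := recurrence 0
    simp only [CharP.cast_eq_zero, zero_add, Chebyshev.S_one, Chebyshev.S_zero, divDiff_X,
      divDiff_one_one] at h
    simp [Finset.Nat.sum_antidiagonal_succ, chebU, one_add_one_eq_two, h, add_comm]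
  | more m h₀ h₁ =>
    rw [sum_antidiagonal_chebU_mul_add_two, ← h₀, ← h₁]
    exact_mod_cast recurrence (m + 1)

end DivDiff

section CompactlySupported

theorem integrable_of_continuousOn_of_measure_compl_eq_zero {α E : Type*} [TopologicalSpace α]
    [T2Space α] [MeasurableSpace α] [OpensMeasurableSpace α] [NormedAddCommGroup E]
    {μ : Measure α} [IsFiniteMeasureOnCompacts μ] {K : Set α} {f : α → E}
    (hK : IsCompact K) (hμK : μ Kᶜ = 0) (hf : ContinuousOn f K) : Integrable f μ := by
  have : IntegrableOn f K μ := hf.integrableOn_compact hK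
  rwa [IntegrableOn, Measure.restrict_eq_self_of_ae_mem (mem_ae_iff.2 hμK)] at this

theorem measure_prod_compl_prod_eq_zero {α β : Type*} [MeasurableSpace α] [MeasurableSpace β]
    {μ : Measure α} {ν : Measure β} [SFinite ν] {s : Set α} {t : Set β}
    (hs : μ sᶜ = 0) (ht : ν tᶜ = 0) : μ.prod ν (s ×ˢ t)ᶜ = 0 := by
  rw [Set.compl_prod_eq_union, measure_union_null_iff, Measure.prod_prod, Measure.prod_prod, hs, ht]
  simp

end CompactlySupported

section Moments

open ProbabilityTheory Filter

theorem measure_eq_of_integral_pow_eq_of_integrable_exp {μ ν : Measure ℝ} [IsFiniteMeasure μ]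
    [IsFiniteMeasure ν] (hμ : ∀ t : ℝ, Integrable (fun x => exp (t * x)) μ)
    (hν : ∀ t : ℝ, Integrable (fun x => exp (t * x)) ν)
    (h : ∀ n : ℕ, ∫ x, x ^ n ∂μ = ∫ x, x ^ n ∂ν) : μ = ν := by
  have hμ_univ : interior (integrableExpSet id μ) = Set.univ :=
    interior_eq_univ.2 (Set.eq_univ_of_forall hμ)
  have hν_univ : interior (integrableExpSet id ν) = Set.univ :=
    interior_eq_univ.2 (Set.eq_univ_of_forall hν)
  have mgf_near_zero : mgf id μ =ᶠ[nhds 0] mgf id ν := by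
    have hseriesμ := hasFPowerSeriesAt_mgf (X := id) (μ := μ) (v := 0) (by simp [hμ_univ])
    have hseriesν := hasFPowerSeriesAt_mgf (X := id) (μ := ν) (v := 0) (by simp [hν_univ])
    simp only [id, zero_mul, exp_zero, mul_one, h] at hseriesμ hseriesν
    exact hseriesμ.eventually_hasSum_sub.mp <| hseriesν.eventually_hasSum_sub.mono
      fun _ hsumν hsumμ => hsumμ.unique hsumν
  have mgf_eq : mgf id μ = mgf id ν := by
    have hanμ := analyticOnNhd_mgf (X := id) (μ := μ)
    have hanν := analyticOnNhd_mgf (X := id) (μ := ν)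
    rw [hμ_univ] at hanμ
    rw [hν_univ] at hanν
    exact hanμ.eq_of_eventuallyEq hanν mgf_near_zero
  have eq_zero_iff : μ = 0 ↔ ν = 0 := by
    have mass_eq : μ.real Set.univ = ν.real Set.univ := by simpa using h 0
    rw [← Measure.measure_univ_eq_zero, ← measureReal_eq_zero_iff, mass_eq,
      measureReal_eq_zero_iff, Measure.measure_univ_eq_zero]
  refine Measure.ext_of_complexMGF_id_eq (funext fun z => ?_)
  exact eqOn_complexMGF_of_mgf' mgf_eq eq_zero_iff (by simp [hμ_univ])

theorem ae_abs_lt_of_integral_pow_le {α : Type*} [MeasurableSpace α] {μ : Measure α}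
    [IsFiniteMeasure μ] {f : α → ℝ} {C R r : ℝ} (hR : 0 ≤ R) (hRr : R < r)
    (hf : ∀ k : ℕ, Integrable (fun x => f x ^ (2 * k)) μ)
    (hC : ∀ k : ℕ, ∫ x, f x ^ (2 * k) ∂μ ≤ C * R ^ (2 * k)) : ∀ᵐ x ∂μ, |f x| < r := by
  have hr : 0 < r := hR.trans_lt hRr
  have markov (k : ℕ) : μ.real {x | r ≤ |f x|} ≤ C * ((R / r) ^ 2) ^ k := by
    have hle := mul_meas_ge_le_integral_of_nonneg
      (Eventually.of_forall fun x => (even_two_mul k).pow_nonneg (f x)) (hf k) (r ^ (2 * k))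
    have hsub : {x | r ≤ |f x|} ⊆ {x | r ^ (2 * k) ≤ f x ^ (2 * k)} := fun x hx => by
      simpa only [Set.mem_ofPred_eq, (even_two_mul k).pow_abs] using
        pow_le_pow_left₀ hr.le hx (2 * k)
    calc μ.real {x | r ≤ |f x|} ≤ μ.real {x | r ^ (2 * k) ≤ f x ^ (2 * k)} := measureReal_mono hsub
      _ ≤ C * R ^ (2 * k) / r ^ (2 * k) := by
        rw [le_div_iff₀' (by positivity)]; exact hle.trans (hC k)
      _ = C * ((R / r) ^ 2) ^ k := by rw [← pow_mul, div_pow, mul_div_assoc]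
  have bound_tendsto : Tendsto (fun k : ℕ => C * ((R / r) ^ 2) ^ k) atTop (nhds 0) := by
    have hlt : (R / r) ^ 2 < 1 :=
      pow_lt_one₀ (by positivity) ((div_lt_one hr).2 hRr) two_ne_zero
    simpa using (tendsto_pow_atTop_nhds_zero_of_lt_one (by positivity) hlt).const_mul C
  have tail_eq_zero : μ.real {x | r ≤ |f x|} = 0 :=
    le_antisymm (ge_of_tendsto' bound_tendsto markov) measureReal_nonneg
  rw [ae_iff]
  simp only [not_lt]
  exact (measureReal_eq_zero_iff (measure_ne_top _ _)).1 tail_eq_zero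

theorem measure_eq_of_integral_pow_eq_of_compact {μ ν : Measure ℝ} [IsFiniteMeasure μ]
    [IsFiniteMeasure ν] {K : Set ℝ} (hK : IsCompact K) (hνK : ν Kᶜ = 0)
    (hμ : ∀ n : ℕ, Integrable (fun x : ℝ => x ^ n) μ)
    (h : ∀ n : ℕ, ∫ x, x ^ n ∂μ = ∫ x, x ^ n ∂ν) : μ = ν := by
  obtain ⟨R, hR, hKR⟩ := hK.isBounded.subset_closedBall_lt 0 0
  have even_moment_le (k : ℕ) : ∫ x, x ^ (2 * k) ∂μ ≤ ν.real Set.univ * R ^ (2 * k) := by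
    rw [h, mul_comm (ν.real _)]
    refine (Real.le_norm_self _).trans (norm_integral_le_of_norm_le_const ?_)
    filter_upwards [mem_ae_iff.2 hνK] with x hx
    rw [norm_pow]
    exact pow_le_pow_left₀ (norm_nonneg x) (mem_closedBall_zero_iff.1 (hKR hx)) _
  have hμ_abs : ∀ᵐ x ∂μ, |x| < R + 1 :=
    ae_abs_lt_of_integral_pow_le hR.le (lt_add_one R) (fun k => hμ (2 * k)) even_moment_le
  have hμ_ball : μ (Metric.closedBall 0 (R + 1))ᶜ = 0 :=
    mem_ae_iff.1 (hμ_abs.mono fun x hx => mem_closedBall_zero_iff.2 hx.le)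
  refine measure_eq_of_integral_pow_eq_of_integrable_exp (fun t => ?_) (fun t => ?_) h
  · exact integrable_of_continuousOn_of_measure_compl_eq_zero (isCompact_closedBall 0 (R + 1))
      hμ_ball (by fun_prop)
  · exact integrable_of_continuousOn_of_measure_compl_eq_zero hK hνK (by fun_prop)

theorem integrable_eval_of_integrable_pow {μ : Measure ℝ}
    (hμ : ∀ n : ℕ, Integrable (fun x : ℝ => x ^ n) μ) (p : ℝ[X]) :
    Integrable (fun x => p.eval x) μ := by
  simp only [eval_eq_sum_range]
  exact integrable_finsetSum _ fun n _ => (hμ n).const_mul _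

end Moments

section Semicircle

theorem sqrt_four_mul_sub_sq_eq_zero {v x : ℝ} (hx : x ∉ Set.Icc (-(2 * √v)) (2 * √v)) :
    √(4 * v - x ^ 2) = 0 := by
  have sqrt_four_mul : √(4 * v) = 2 * √v := by
    rw [sqrt_mul zero_le_four, show (4 : ℝ) = 2 ^ 2 by norm_num, sqrt_sq zero_le_two]
  contrapose! hx
  have hlt : x ^ 2 < 4 * v := sub_pos.1 (sqrt_pos.1 (hx.lt_of_le' (sqrt_nonneg _)))
  exact abs_le.1 (sqrt_four_mul ▸ abs_le_sqrt hlt.le)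

theorem semicircle_compl_Icc (v : ℝ) : semicircle v (Set.Icc (-(2 * √v)) (2 * √v))ᶜ = 0 := by
  rw [semicircle, withDensity_apply_eq_zero (by fun_prop), ← nonpos_iff_eq_zero]
  refine (measure_mono_null (t := ∅) ?_ measure_empty).le
  rintro x ⟨hdensity, hx⟩
  simp [sqrt_four_mul_sub_sq_eq_zero hx] at hdensity

instance isFiniteMeasure_semicircle (v : ℝ) : IsFiniteMeasure (semicircle v) := by
  refine isFiniteMeasure_withDensity_ofReal (Integrable.hasFiniteIntegral ?_)
  refine Continuous.integrable_of_hasCompactSupport (by fun_prop) ?_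
  refine HasCompactSupport.intro (isCompact_Icc (a := -(2 * √v)) (b := 2 * √v)) fun x hx => ?_
  rw [sqrt_four_mul_sub_sq_eq_zero hx, zero_div]

theorem integral_semicircle_eq_intervalIntegral {v : ℝ} (hv : 0 ≤ v) (f : ℝ → ℝ) :
    ∫ x, f x ∂semicircle v =
      ∫ x in (-(2 * √v))..(2 * √v), √(4 * v - x ^ 2) / (2 * π * v) * f x := by
  have hle : -(2 * √v) ≤ 2 * √v := neg_le_self (by positivity)
  rw [semicircle, integral_withDensity_eq_integral_toReal_smul (by fun_prop) (by simp),
    intervalIntegral.integral_of_le hle, ← integral_Icc_eq_integral_Ioc,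
    setIntegral_eq_integral_of_forall_compl_eq_zero fun x hx => by
      simp [sqrt_four_mul_sub_sq_eq_zero hx]]
  refine integral_congr_ae (.of_forall fun x => ?_)
  simp only [smul_eq_mul]
  rw [ENNReal.toReal_ofReal (by positivity)]

theorem integral_semicircle_eq_integral_cos {v : ℝ} (hv : 0 < v) {f : ℝ → ℝ} (hf : Continuous f) :
    ∫ x, f x ∂semicircle v =
      2 / π * ∫ t in (0 : ℝ)..π, f (2 * √v * cos t) * sin t ^ 2 := by
  have substitution := intervalIntegral.integral_comp_mul_deriv (a := 0) (b := π)
    (f := fun t => 2 * √v * cos t) (f' := fun t => 2 * √v * -sin t)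
    (g := fun x => √(4 * v - x ^ 2) / (2 * π * v) * f x)
    (fun t _ => (hasDerivAt_cos t).const_mul _) (by fun_prop) (by fun_prop)
  simp only [cos_zero, cos_pi, mul_one, mul_neg] at substitution
  rw [integral_semicircle_eq_intervalIntegral hv.le, intervalIntegral.integral_symm, ← substitution,
    ← intervalIntegral.integral_neg, ← intervalIntegral.integral_const_mul]
  refine intervalIntegral.integral_congr fun t ht => ?_
  rw [Set.uIcc_of_le pi_pos.le] at ht
  have density_cos : √(4 * v - (2 * √v * cos t) ^ 2) = 2 * √v * sin t := by
    have hsq : 4 * v - (2 * √v * cos t) ^ 2 = (2 * √v * sin t) ^ 2 := by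
      simp only [mul_pow, sq_sqrt hv.le, sin_sq]
      ring
    rw [hsq, sqrt_sq (mul_nonneg (by positivity) (sin_nonneg_of_mem_Icc ht))]
  simp only [Function.comp_apply, density_cos]
  field_simp
  rw [sq_sqrt hv.le]
  ring

theorem integral_cos_int_mul (k : ℤ) :
    ∫ t in (0 : ℝ)..π, cos (k * t) = if k = 0 then π else 0 := by
  split_ifs with hk
  · simp [hk]
  · rw [intervalIntegral.integral_comp_mul_left _ (Int.cast_ne_zero.2 hk)]
    simp [sin_int_mul_pi]

theorem integral_sin_mul_sin (n m : ℕ) :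
    ∫ t in (0 : ℝ)..π, sin ((n + 1) * t) * sin ((m + 1) * t) = if n = m then π / 2 else 0 := by
  have product_to_sum (t : ℝ) : sin ((n + 1) * t) * sin ((m + 1) * t) =
      (cos ((n - m : ℤ) * t) - cos ((n + m + 2 : ℤ) * t)) / 2 := by
    have hsub : ((n - m : ℤ) : ℝ) * t = (n + 1) * t - (m + 1) * t := by push_cast; ring
    have hadd : ((n + m + 2 : ℤ) : ℝ) * t = (n + 1) * t + (m + 1) * t := by push_cast; ring
    rw [hsub, hadd, cos_sub, cos_add]
    ring
  simp only [product_to_sum]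
  rw [intervalIntegral.integral_div, intervalIntegral.integral_sub
    (Continuous.intervalIntegrable (by fun_prop) _ _)
    (Continuous.intervalIntegrable (by fun_prop) _ _), integral_cos_int_mul, integral_cos_int_mul,
    if_neg (by lia : (n + m + 2 : ℤ) ≠ 0), sub_zero]
  simp only [sub_eq_zero, Nat.cast_inj, ite_div, zero_div]

theorem integral_chebU_mul_chebU (n m : ℕ) :
    ∫ x, chebU n x * chebU m x ∂semicircle 1 = if n = m then 1 else 0 := by
  rw [integral_semicircle_eq_integral_cos (f := fun x => chebU n x * chebU m x) one_pos
    ((continuous_chebU n).mul (continuous_chebU m))]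
  have integrand (t : ℝ) : chebU n (2 * √1 * cos t) * chebU m (2 * √1 * cos t) * sin t ^ 2 =
      sin ((n + 1) * t) * sin ((m + 1) * t) := by
    rw [← chebU_two_mul_cos_mul_sin, ← chebU_two_mul_cos_mul_sin, sqrt_one, mul_one]
    ring
  have normalization : 2 / π * (π / 2) = 1 := by field_simp
  simp only [integrand, integral_sin_mul_sin, mul_ite, mul_zero, normalization]

theorem integral_chebU (n : ℕ) : ∫ x, chebU n x ∂semicircle 1 = if n = 0 then 1 else 0 := by
  simpa [chebU] using integral_chebU_mul_chebU n 0

theorem integrable_semicircle_of_continuous {E : Type*} [NormedAddCommGroup E] (v : ℝ) {f : ℝ → E}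
    (hf : Continuous f) : Integrable f (semicircle v) :=
  integrable_of_continuousOn_of_measure_compl_eq_zero isCompact_Icc (semicircle_compl_Icc v)
    hf.continuousOn

end Semicircle

section Stein

theorem integral_divDiff_one_chebyshevS_succ (m : ℕ) (x : ℝ) :
    ∫ y, divDiff 1 (Chebyshev.S ℝ (m + 1)) ![x, y] ∂semicircle 1 = chebU m x := by
  simp only [divDiff_one_chebyshevS_succ]
  rw [integral_finsetSum _ fun a _ =>
    (integrable_semicircle_of_continuous 1 (continuous_chebU a.2)).const_mul _]
  simp only [integral_const_mul, integral_chebU, mul_ite, mul_one, mul_zero]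
  rw [Finset.sum_eq_single (m, 0)]
  · simp
  · rintro ⟨i, j⟩ hij hne
    refine if_neg fun hj : j = 0 => hne ?_
    rw [← Finset.HasAntidiagonal.mem_antidiagonal.1 hij, hj, add_zero]
  · simp

theorem integrable_chebU_mul_divDiff (n : ℕ) (p : ℝ[X]) :
    Integrable (fun z : ℝ × ℝ => chebU n z.1 * divDiff 1 p ![z.1, z.2])
      ((semicircle 1).prod (semicircle 1)) := by
  have hcont : Continuous fun z : ℝ × ℝ => chebU n z.1 * divDiff 1 p ![z.1, z.2] :=
    ((continuous_chebU n).comp continuous_fst).mul ((continuous_divDiff 1 p).comp (by fun_prop))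
  exact integrable_of_continuousOn_of_measure_compl_eq_zero (isCompact_Icc.prod isCompact_Icc)
    (measure_prod_compl_prod_eq_zero (semicircle_compl_Icc 1) (semicircle_compl_Icc 1))
    hcont.continuousOn

theorem integral_chebU_succ_mul_eval (n : ℕ) (p : ℝ[X]) :
    ∫ x, chebU (n + 1) x * p.eval x ∂semicircle 1 =
      ∫ x, ∫ y, chebU n x * divDiff 1 p ![x, y] ∂semicircle 1 ∂semicircle 1 := by
  induction p using chebyshevS_induction with
  | chebyshev m =>
    cases m with
    | zero => simp [divDiff_one_one, integral_chebU]
    | succ m =>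
      simp only [← chebU_eq_eval_chebyshevS, integral_const_mul]
      simp only [Nat.cast_succ, integral_divDiff_one_chebyshevS_succ, integral_chebU_mul_chebU,
        Nat.add_right_cancel_iff]
  | add p q hp hq =>
    have integrable_left (r : ℝ[X]) :
        Integrable (fun x => chebU (n + 1) x * r.eval x) (semicircle 1) :=
      integrable_semicircle_of_continuous 1 ((continuous_chebU (n + 1)).mul r.continuous)
    simp only [eval_add, divDiff_add, mul_add]
    rw [integral_add (integrable_left p) (integrable_left q), hp, hq]
    exact (integral_integral_add (integrable_chebU_mul_divDiff n p)
      (integrable_chebU_mul_divDiff n q)).symm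
  | smul c p hp =>
    simp only [eval_smul, smul_eq_mul, divDiff_smul, mul_left_comm _ c, integral_const_mul] at hp ⊢
    rw [hp]

theorem eq_semicircle_of_integral_chebU_eq_zero {μ : Measure ℝ} [IsProbabilityMeasure μ]
    (hμ : ∀ n : ℕ, Integrable (fun x : ℝ => x ^ n) μ)
    (h : ∀ n : ℕ, ∫ x, chebU (n + 1) x ∂μ = 0) : μ = semicircle 1 := by
  have integral_eval (p : ℝ[X]) : ∫ x, p.eval x ∂μ = ∫ x, p.eval x ∂semicircle 1 := by
    induction p using chebyshevS_induction with
    | chebyshev n =>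
      simp only [← chebU_eq_eval_chebyshevS, integral_chebU]
      cases n with
      | zero => simp [chebU]
      | succ n => simp [h]
    | add p q hp hq =>
      simp only [eval_add]
      rw [integral_add (integrable_eval_of_integrable_pow hμ p)
        (integrable_eval_of_integrable_pow hμ q), hp, hq,
        integral_add (integrable_semicircle_of_continuous 1 p.continuous)
        (integrable_semicircle_of_continuous 1 q.continuous)]
    | smul c p hp => simp only [eval_smul, smul_eq_mul, integral_const_mul, hp]
  refine measure_eq_of_integral_pow_eq_of_compact isCompact_Icc (semicircle_compl_Icc 1) hμ
    fun n => ?_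
  simpa only [eval_pow, eval_X] using integral_eval (X ^ n)

end Stein

theorem semicircle_iff_chebyshev_stein_general (μ : Measure ℝ) [IsProbabilityMeasure μ]
    (hμ : ∀ n : ℕ, Integrable (fun x : ℝ => x ^ n) μ) :
    μ = semicircle 1 ↔
      ∀ n : ℕ, 1 ≤ n → ∀ p : Polynomial ℝ,
        ∫ x, chebU n x * p.eval x ∂μ =
          ∫ x, ∫ y, chebU (n - 1) x * divDiff 1 p ![x, y] ∂μ ∂μ := by
  constructor
  · rintro rfl n hn p
    obtain ⟨n, rfl⟩ := Nat.exists_eq_add_of_le' hn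
    exact integral_chebU_succ_mul_eval n p
  · intro h
    refine eq_semicircle_of_integral_chebU_eq_zero hμ fun n => ?_
    simpa [divDiff_one_one] using h (n + 1) n.succ_pos 1

/-- A compactly supported probability measure `μ` on `ℝ` is the standard semicircle law iff
for every `n ≥ 1` and every real polynomial `p`,
`∫ U_n(x)·p(x) dμ(x) = ∫∫ U_{n−1}(x)·Δ¹p(x,y) dμ(x)dμ(y)`. -/
theorem semicircle_iff_chebyshev_stein (μ : Measure ℝ) [IsProbabilityMeasure μ]
    (hμc : ∃ K : Set ℝ, IsCompact K ∧ μ Kᶜ = 0) :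
    μ = semicircle 1 ↔
      ∀ n : ℕ, 1 ≤ n → ∀ p : Polynomial ℝ,
        ∫ x, chebU n x * p.eval x ∂μ =
          ∫ x, ∫ y, chebU (n - 1) x * divDiff 1 p ![x, y] ∂μ ∂μ := by
  obtain ⟨K, hK, hμK⟩ := hμc
  exact semicircle_iff_chebyshev_stein_general μ fun n =>
    integrable_of_continuousOn_of_measure_compl_eq_zero hK hμK (by fun_prop)
end

section
/- Let S(0,1) denote the standard semicircle law. For every integer k ≥ 1 and every real polynomial p, ∫ U_k(x)·p(x) dS(0,1)(x) = ∫_{ℝ^{k+1}} Δᵏp(x₀,…,x_k) dS(0,1)^{⊗(k+1)}(x₀,…,x_k). Equivalently, the k-th order conjugate variable of a standard semicircular variable is the k-th Chebyshev polynomial U_k evaluated at it. -/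
open MeasureTheory

/-!
Let `M` be the generating series of the moments of `μ = S(0,1)`. Expanding `Δᵏ[xᵐ]` into monomials,
Fubini shows that its integral against `μ^{⊗(k+1)}` is the coefficient of `Xᵐ` in `Xᵏ M^{k+1}`.
On the other side, the three-term recurrence of `U_k` shows that `M_k = ∑ₘ (∫ U_k xᵐ dμ) Xᵐ`
satisfies `X M_{k+2} = M_{k+1} - X M_k`, with `M₀ = M` and `M = 1 + X M₁`. The series `Xᵏ M^{k+1}`
obey the same relations because `M = 1 + X² M²`, the Catalan functional equation: integrating by
parts against the density yields the recurrence that makes the even moments Catalan numbers.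
-/

open PowerSeries

/-- The real-valued density of `semicircle v`. For `v ≤ 0` it vanishes identically, the square root
being `0` for `v < 0` and the denominator being `0` for `v = 0`. -/
noncomputable def semicirclePDFReal (v x : ℝ) : ℝ :=
  √(4 * v - x ^ 2) / (2 * Real.pi * v)

lemma semicirclePDFReal_nonneg (v x : ℝ) : 0 ≤ semicirclePDFReal v x := by
  rw [semicirclePDFReal]
  rcases le_total 0 v with hv | hv
  · positivity
  · rw [Real.sqrt_eq_zero_of_nonpos (by nlinarith [sq_nonneg x]), zero_div]

lemma semicirclePDFReal_neg (v x : ℝ) : semicirclePDFReal v (-x) = semicirclePDFReal v x := by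
  rw [semicirclePDFReal, semicirclePDFReal, neg_sq]

@[fun_prop]
lemma continuous_semicirclePDFReal (v : ℝ) : Continuous (semicirclePDFReal v) := by
  unfold semicirclePDFReal
  fun_prop

lemma hasCompactSupport_sqrt_sub_sq (c : ℝ) : HasCompactSupport fun x : ℝ => √(c - x ^ 2) := by
  refine HasCompactSupport.intro (isCompact_Icc (a := -√c) (b := √c)) fun x hx => ?_
  have hx' : √c < |x| := by rwa [Set.mem_Icc, ← abs_le, not_le] at hx
  have hc : c < |x| ^ 2 := Real.lt_sq_of_sqrt_lt hx'
  exact Real.sqrt_eq_zero_of_nonpos (by rw [← sq_abs]; linarith)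

lemma hasCompactSupport_semicirclePDFReal (v : ℝ) : HasCompactSupport (semicirclePDFReal v) := by
  unfold semicirclePDFReal
  simp only [div_eq_mul_inv]
  exact (hasCompactSupport_sqrt_sub_sq (4 * v)).mul_right

lemma integral_sqrt_one_sub_sq_eq_pi_div_two : ∫ x : ℝ, √(1 - x ^ 2) = Real.pi / 2 := by
  rw [← integral_sqrt_one_sub_sq, intervalIntegral.integral_of_le (by norm_num)]
  refine (setIntegral_eq_integral_of_forall_compl_eq_zero fun x hx => ?_).symm
  refine Real.sqrt_eq_zero_of_nonpos ?_
  rw [Set.mem_Ioc, not_and_or, not_lt, not_le] at hx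
  rcases hx with hx | hx <;> nlinarith

lemma integral_semicirclePDFReal {v : ℝ} (hv : 0 < v) : ∫ x, semicirclePDFReal v x = 1 := by
  have hscale (u : ℝ) : semicirclePDFReal v (2 * √v * u) = (Real.pi * √v)⁻¹ * √(1 - u ^ 2) := by
    have hsq : 4 * v - (2 * √v * u) ^ 2 = (2 * √v) ^ 2 * (1 - u ^ 2) := by
      linear_combination (-4 : ℝ) * Real.sq_sqrt hv.le
    rw [semicirclePDFReal, hsq, Real.sqrt_mul (sq_nonneg _), Real.sqrt_sq (by positivity)]
    field_simp
    rw [Real.sq_sqrt hv.le]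
    ring
  have hsubst := Measure.integral_comp_mul_left (semicirclePDFReal v) (2 * √v)
  rw [abs_of_pos (by positivity), smul_eq_mul] at hsubst
  simp only [hscale, integral_const_mul, integral_sqrt_one_sub_sq_eq_pi_div_two] at hsubst
  field_simp at hsubst
  linarith

lemma integral_semicircle (v : ℝ) (f : ℝ → ℝ) :
    ∫ x, f x ∂(semicircle v) = ∫ x, semicirclePDFReal v x * f x := by
  rw [semicircle, integral_withDensity_eq_integral_toReal_smul (by fun_prop) (by simp)]
  exact integral_congr_ae (.of_forall fun x =>
    congrArg (· * f x) (ENNReal.toReal_ofReal (semicirclePDFReal_nonneg v x)))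

lemma integrable_semicircle (v : ℝ) {f : ℝ → ℝ} (hf : Continuous f) :
    Integrable f (semicircle v) := by
  rw [semicircle, integrable_withDensity_iff_integrable_smul' (by fun_prop) (by simp)]
  have hprod : Integrable (fun x => semicirclePDFReal v x * f x) :=
    ((continuous_semicirclePDFReal v).mul hf).integrable_of_hasCompactSupport
      (hasCompactSupport_semicirclePDFReal v).mul_right
  refine hprod.congr (.of_forall fun x => ?_)
  exact congrArg (· * f x) (ENNReal.toReal_ofReal (semicirclePDFReal_nonneg v x)).symm

lemma isProbabilityMeasure_semicircle {v : ℝ} (hv : 0 < v) :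
    IsProbabilityMeasure (semicircle v) := by
  have hone : ∫ _, (1 : ℝ) ∂(semicircle v) = 1 := by
    simpa only [mul_one, integral_semicirclePDFReal hv] using integral_semicircle v fun _ => 1
  exact isProbabilityMeasure_iff_real.2 (by simpa using hone)

lemma integral_semicircle_of_odd (v : ℝ) {f : ℝ → ℝ} (hf : f.Odd) :
    ∫ x, f x ∂(semicircle v) = 0 := by
  have hneg := integral_neg_eq_self (fun x => semicirclePDFReal v x * f x) volume
  simp only [semicirclePDFReal_neg, hf _, mul_neg, integral_neg] at hneg
  rw [integral_semicircle]
  linarith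

lemma hasDerivAt_mul_sqrt (y : ℝ) : HasDerivAt (fun y => y * √y) (3 / 2 * √y) y := by
  have hcont : Continuous fun y => y * √y := by fun_prop
  have hcont' : Continuous fun y => 3 / 2 * √y := by fun_prop
  refine hasDerivAt_of_hasDerivAt_of_ne' (x := 0) (fun y hy => ?_)
    hcont.continuousAt hcont'.continuousAt y
  refine ((hasDerivAt_id y).mul (Real.hasDerivAt_sqrt hy)).congr_deriv ?_
  have hdiv : y / √y = √y := Real.div_sqrt
  simp only [id]
  linear_combination (1 / 2 : ℝ) * hdiv

-- The weight `w = √(4v - x²)` solves the Pearson equation `d/dx [(4v - x²) w] = -3 x w`.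
lemma integral_semicircle_pearson (v : ℝ) {g g' : ℝ → ℝ} (hg : ∀ x, HasDerivAt g (g' x) x)
    (hg' : Continuous g') :
    ∫ x, ((4 * v - x ^ 2) * g' x - 3 * x * g x) ∂(semicircle v) = 0 := by
  have hgc : Continuous g := continuous_iff_continuousAt.2 fun x => (hg x).continuousAt
  have hderiv (x : ℝ) : HasDerivAt (fun x => (4 * v - x ^ 2) * √(4 * v - x ^ 2) * g x)
      (√(4 * v - x ^ 2) * ((4 * v - x ^ 2) * g' x - 3 * x * g x)) x := by
    have hquad : HasDerivAt (fun x : ℝ => 4 * v - x ^ 2) (-(2 * x)) x := by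
      simpa using (hasDerivAt_pow 2 x).const_sub (4 * v)
    exact (((hasDerivAt_mul_sqrt _).comp x hquad).mul (hg x)).congr_deriv (by
      simp only [Function.comp_apply]; ring)
  have hsupp := hasCompactSupport_sqrt_sub_sq (4 * v)
  have hzero := integral_eq_zero_of_hasDerivAt_of_integrable hderiv
    (Continuous.integrable_of_hasCompactSupport (by fun_prop) hsupp.mul_right)
    (Continuous.integrable_of_hasCompactSupport (by fun_prop) hsupp.mul_left.mul_right)
  simp only [integral_semicircle, semicirclePDFReal, div_mul_eq_mul_div, integral_div, hzero,
    zero_div]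

lemma integral_pow_add_two_semicircle (v : ℝ) (n : ℕ) :
    (n + 4) * ∫ x, x ^ (n + 2) ∂(semicircle v) = 4 * v * (n + 1) * ∫ x, x ^ n ∂(semicircle v) := by
  have hpearson := integral_semicircle_pearson v (g := fun x => x ^ (n + 1))
    (g' := fun x => (n + 1) * x ^ n) (fun x => by simpa using hasDerivAt_pow (n + 1) x)
    (by fun_prop)
  have hexpand (x : ℝ) : (4 * v - x ^ 2) * ((n + 1) * x ^ n) - 3 * x * x ^ (n + 1) =
      4 * v * (n + 1) * x ^ n - (n + 4) * x ^ (n + 2) := by ring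
  simp only [hexpand] at hpearson
  rw [integral_sub (integrable_semicircle v (by fun_prop)) (integrable_semicircle v (by fun_prop)),
    integral_const_mul, integral_const_mul] at hpearson
  linarith

lemma add_two_mul_catalan_succ (n : ℕ) :
    (n + 2) * catalan (n + 1) = 2 * (2 * n + 1) * catalan n := by
  refine Nat.eq_of_mul_eq_mul_left n.succ_pos ?_
  calc (n + 1) * ((n + 2) * catalan (n + 1))
      = (n + 1) * (n + 1).centralBinom := by rw [← succ_mul_catalan_eq_centralBinom (n + 1)]
    _ = 2 * (2 * n + 1) * n.centralBinom := n.succ_mul_centralBinom_succ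
    _ = (n + 1) * (2 * (2 * n + 1) * catalan n) := by
      rw [← succ_mul_catalan_eq_centralBinom n]; ring

lemma integral_pow_two_mul_semicircle {v : ℝ} (hv : 0 < v) (n : ℕ) :
    ∫ x, x ^ (2 * n) ∂(semicircle v) = v ^ n * catalan n := by
  induction n with
  | zero =>
    have := isProbabilityMeasure_semicircle hv
    simp
  | succ n ih =>
    have hmoment := integral_pow_add_two_semicircle v (2 * n)
    have hcatalan : ((n : ℝ) + 2) * catalan (n + 1) = 2 * (2 * n + 1) * catalan n :=
      mod_cast add_two_mul_catalan_succ n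
    rw [ih] at hmoment
    push_cast at hmoment
    refine mul_left_cancel₀ (show (n : ℝ) + 2 ≠ 0 by positivity) ?_
    rw [mul_add_one 2 n]
    linear_combination hmoment / 2 - v ^ (n + 1) * hcatalan

/-- The generating power series `∑ₙ mₙ Xⁿ` of the moments `mₙ = ∫ xⁿ dμ`; the `n`-th coefficient is
`0` by convention when `xⁿ` is not integrable. -/
noncomputable def momentSeries (μ : Measure ℝ) : PowerSeries ℝ :=
  PowerSeries.mk fun n => ∫ x, x ^ n ∂μ

lemma coeff_momentSeries (μ : Measure ℝ) (n : ℕ) : coeff n (momentSeries μ) = ∫ x, x ^ n ∂μ :=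
  coeff_mk _ _

lemma momentSeries_semicircle {v : ℝ} (hv : 0 < v) :
    momentSeries (semicircle v) = expand 2 two_ne_zero
      (rescale v (map (Nat.castRingHom ℝ) catalanSeries)) := by
  ext n
  rw [coeff_momentSeries, coeff_expand]
  rcases Nat.even_or_odd' n with ⟨n, rfl | rfl⟩
  · simp [integral_pow_two_mul_semicircle hv]
  · rw [if_neg (by lia), integral_semicircle_of_odd]
    exact fun x => (odd_two_mul_add_one n).neg_pow x

lemma momentSeries_semicircle_eq_one_add {v : ℝ} (hv : 0 < v) :
    momentSeries (semicircle v) = 1 + C v * X ^ 2 * momentSeries (semicircle v) ^ 2 := by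
  have h := congrArg (fun s => expand 2 two_ne_zero (rescale v (map (Nat.castRingHom ℝ) s)))
    catalanSeries_sq_mul_X_add_one
  simp only [map_add, map_mul, map_pow, map_one, map_X, rescale_X, expand_C, expand_X,
    ← momentSeries_semicircle hv] at h
  linear_combination -h

lemma coeff_pow_eq_sum_antidiagonalTuple {R : Type*} [CommSemiring R] (f : PowerSeries R)
    (k n : ℕ) :
    coeff n (f ^ k) = ∑ a ∈ Finset.Nat.antidiagonalTuple k n, ∏ i, coeff (a i) f := by
  have hprod := coeff_prod (fun _ : Fin k => f) n Finset.univ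
  rw [Finset.prod_const, Finset.card_fin] at hprod
  rw [hprod, ← Finset.piAntidiag_univ_fin_eq_antidiagonalTuple, Finset.finsuppAntidiag,
    Finset.sum_map]
  exact Finset.sum_attach _ fun a : Fin k → ℕ => ∏ i, coeff (a i) f

section DividedDifference

variable {μ : Measure ℝ} [SigmaFinite μ]

lemma integrable_prod_pow_pi (hμ : ∀ n : ℕ, Integrable (fun x => x ^ n) μ) {k : ℕ}
    (a : Fin k → ℕ) :
    Integrable (fun x : Fin k → ℝ => ∏ i, x i ^ a i) (Measure.pi fun _ => μ) :=
  Integrable.fintype_prod fun i => hμ (a i)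

lemma integrable_divDiffMonomial (hμ : ∀ n : ℕ, Integrable (fun x => x ^ n) μ) (k m : ℕ) :
    Integrable (divDiffMonomial k m) (Measure.pi fun _ => μ) := by
  unfold divDiffMonomial
  split_ifs
  · exact integrable_finsetSum _ fun a _ => integrable_prod_pow_pi hμ a
  · exact integrable_zero _ _ _

lemma integral_divDiffMonomial (hμ : ∀ n : ℕ, Integrable (fun x => x ^ n) μ) (k m : ℕ) :
    ∫ x, divDiffMonomial k m x ∂(Measure.pi fun _ => μ) =
      coeff m (X ^ k * momentSeries μ ^ (k + 1)) := by
  rw [coeff_X_pow_mul']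
  unfold divDiffMonomial
  split_ifs
  · rw [integral_finsetSum _ fun a _ => integrable_prod_pow_pi hμ a,
      coeff_pow_eq_sum_antidiagonalTuple]
    simp only [coeff_momentSeries]
    exact Finset.sum_congr rfl fun a _ =>
      integral_fintype_prod_eq_prod (μ := fun _ => μ) fun i x => x ^ a i
  · exact integral_zero _ _

lemma integral_divDiff (hμ : ∀ n : ℕ, Integrable (fun x => x ^ n) μ) (k : ℕ)
    (p : Polynomial ℝ) :
    ∫ x, divDiff k p x ∂(Measure.pi fun _ => μ) =
      ∑ m ∈ Finset.range (p.natDegree + 1),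
        p.coeff m * coeff m (X ^ k * momentSeries μ ^ (k + 1)) := by
  unfold divDiff
  rw [integral_finsetSum _ fun m _ => (integrable_divDiffMonomial hμ k m).const_mul _]
  simp only [integral_const_mul, integral_divDiffMonomial hμ]

end DividedDifference

section Chebyshev

variable {μ : Measure ℝ}

lemma chebU_eq_eval_S (k : ℕ) (x : ℝ) : chebU k x = (Polynomial.Chebyshev.S ℝ k).eval x := by
  induction k using Nat.twoStepInduction with
  | zero => simp [chebU]
  | one => simp [chebU]
  | more k ih ih' =>
    rw [chebU, ih, ih']
    simp [Polynomial.Chebyshev.S_add_two]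

lemma integrable_polynomial_eval (hμ : ∀ n : ℕ, Integrable (fun x => x ^ n) μ)
    (p : Polynomial ℝ) : Integrable (fun x => p.eval x) μ := by
  simp only [Polynomial.eval_eq_sum_range]
  exact integrable_finsetSum _ fun n _ => (hμ n).const_mul _

lemma integrable_chebU_mul_pow (hμ : ∀ n : ℕ, Integrable (fun x => x ^ n) μ) (k m : ℕ) :
    Integrable (fun x => chebU k x * x ^ m) μ := by
  have heval (x : ℝ) : chebU k x * x ^ m =
      (Polynomial.Chebyshev.S ℝ k * Polynomial.X ^ m).eval x := by simp [chebU_eq_eval_S]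
  simpa only [heval] using integrable_polynomial_eval hμ _

lemma integral_chebU_mul_pow (hμ : ∀ n : ℕ, Integrable (fun x => x ^ n) μ)
    (hM : momentSeries μ = 1 + X ^ 2 * momentSeries μ ^ 2) (k m : ℕ) :
    ∫ x, chebU k x * x ^ m ∂μ = coeff m (X ^ k * momentSeries μ ^ (k + 1)) := by
  induction k using Nat.twoStepInduction generalizing m with
  | zero => simp [chebU, coeff_momentSeries]
  | one =>
    calc ∫ x, chebU 1 x * x ^ m ∂μ
        = coeff (m + 1) (momentSeries μ) := by simp only [chebU, coeff_momentSeries, pow_succ']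
      _ = coeff (m + 1) (1 + X * (X * momentSeries μ ^ 2)) := by
        rw [← mul_assoc, ← sq, ← hM]
      _ = coeff m (X ^ 1 * momentSeries μ ^ (1 + 1)) := by
        rw [map_add, coeff_one, if_neg m.succ_ne_zero, zero_add, coeff_succ_X_mul, pow_one]
  | more k ih ih' =>
    have hrec (x : ℝ) : chebU (k + 2) x * x ^ m =
        chebU (k + 1) x * x ^ (m + 1) - chebU k x * x ^ m := by rw [chebU]; ring
    have hseries : X * (X ^ (k + 2) * momentSeries μ ^ (k + 3)) =
        X ^ (k + 1) * momentSeries μ ^ (k + 2) - X * (X ^ k * momentSeries μ ^ (k + 1)) := by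
      linear_combination -(X ^ (k + 1) * momentSeries μ ^ (k + 1)) * hM
    simp only [hrec]
    rw [integral_sub (integrable_chebU_mul_pow hμ _ _) (integrable_chebU_mul_pow hμ _ _), ih, ih',
      ← coeff_succ_X_mul m, ← coeff_succ_X_mul m, ← map_sub, hseries]

lemma integral_chebU_mul_eval (hμ : ∀ n : ℕ, Integrable (fun x => x ^ n) μ)
    (hM : momentSeries μ = 1 + X ^ 2 * momentSeries μ ^ 2) (k : ℕ) (p : Polynomial ℝ) :
    ∫ x, chebU k x * p.eval x ∂μ =
      ∑ m ∈ Finset.range (p.natDegree + 1),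
        p.coeff m * coeff m (X ^ k * momentSeries μ ^ (k + 1)) := by
  simp only [Polynomial.eval_eq_sum_range, Finset.mul_sum, mul_left_comm (chebU k _)]
  rw [integral_finsetSum _ fun m _ => (integrable_chebU_mul_pow hμ k m).const_mul _]
  simp only [integral_const_mul, integral_chebU_mul_pow hμ hM]

end Chebyshev

/-- The `k`-th order conjugate variable of a standard semicircular variable is `U_k`:
`∫ U_k(x)·p(x) dS(0,1)(x) = ∫_{ℝ^{k+1}} Δᵏp dS(0,1)^{⊗(k+1)}` for every real polynomial `p`. -/
theorem semicircle_higher_conjugate (k : ℕ) (hk : 1 ≤ k) (p : Polynomial ℝ) :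
    ∫ x, chebU k x * p.eval x ∂(semicircle 1) =
      ∫ x : Fin (k + 1) → ℝ, divDiff k p x ∂(Measure.pi fun _ => semicircle 1) := by
  have := isProbabilityMeasure_semicircle one_pos
  have hpow (n : ℕ) : Integrable (fun x => x ^ n) (semicircle 1) :=
    integrable_semicircle 1 (continuous_pow n)
  have hM : momentSeries (semicircle 1) = 1 + X ^ 2 * momentSeries (semicircle 1) ^ 2 := by
    simpa only [map_one, one_mul] using momentSeries_semicircle_eq_one_add one_pos
  rw [integral_chebU_mul_eval hpow hM, integral_divDiff hpow]
end

section
/- For every σ > 0, the centered semicircular distribution S(0,σ²) of variance σ², i.e., the probability measure on ℝ with density x ↦ (1/(2πσ²))·√(4σ² − x²) on [−2σ, 2σ], has vanishing odd moments, and for every nonnegative integer m its even moments are given by ∫_{−2σ}^{2σ} x^{2m} dS(0,σ²)(x) = C_m·σ^{2m}, where C_m = (1/(m+1))·binom(2m, m) is the m-th Catalan number. -/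
open MeasureTheory

/-!
Evenness of the density kills the odd moments. For the even ones, the substitution
`x = 2σ cos t` turns the semicircular density into `(2/π) sin² t` on `[0, π]`, and since
`sin² = 1 - cos²`, the moment of order `2m` is a difference of two consecutive Wallis integrals
`∫ cos^(2m) = π binom(2m, m) / 4^m`, which produces the Catalan number.
-/

open Real Set

lemma integral_cos_pow_add_two_zero_pi (n : ℕ) :
    ∫ t in 0..π, cos t ^ (n + 2) = (n + 1) / (n + 2) * ∫ t in 0..π, cos t ^ n := by
  simp [integral_cos_pow]

lemma integral_cos_pow_even_zero_pi (m : ℕ) :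
    ∫ t in 0..π, cos t ^ (2 * m) = π * m.centralBinom / 4 ^ m := by
  induction m with
  | zero => simp
  | succ m ih =>
    have centralBinom_succ :
        ((m : ℝ) + 1) * (m + 1).centralBinom = 2 * (2 * m + 1) * m.centralBinom :=
      mod_cast m.succ_mul_centralBinom_succ
    rw [mul_add_one, integral_cos_pow_add_two_zero_pi, ih]
    push_cast
    rw [pow_succ]
    field_simp
    linear_combination -2 * centralBinom_succ

lemma integral_cos_pow_even_mul_sin_sq_zero_pi (m : ℕ) :
    ∫ t in 0..π, cos t ^ (2 * m) * sin t ^ 2 = π * catalan m / (2 * 4 ^ m) := by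
  have centralBinom_eq : (m.centralBinom : ℝ) = (m + 1) * catalan m :=
    mod_cast (succ_mul_catalan_eq_centralBinom m).symm
  calc ∫ t in 0..π, cos t ^ (2 * m) * sin t ^ 2
      = ∫ t in 0..π, (cos t ^ (2 * m) - cos t ^ (2 * m + 2)) := by
        simp only [sin_sq, mul_sub, mul_one, pow_add]
    _ = (∫ t in 0..π, cos t ^ (2 * m)) - ∫ t in 0..π, cos t ^ (2 * m + 2) :=
        intervalIntegral.integral_sub
          (Continuous.intervalIntegrable (by fun_prop) _ _)
          (Continuous.intervalIntegrable (by fun_prop) _ _)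
    _ = π * catalan m / (2 * 4 ^ m) := by
        rw [integral_cos_pow_add_two_zero_pi, integral_cos_pow_even_zero_pi, centralBinom_eq]
        push_cast
        field_simp
        ring

section Integration

variable {E : Type*} [NormedAddCommGroup E] [NormedSpace ℝ E]

lemma integral_eq_zero_of_odd {G : Type*} [MeasurableSpace G] [AddGroup G] [MeasurableNeg G]
    {μ : Measure G} [μ.IsNegInvariant] {f : G → E} (hf : f.Odd) : ∫ x, f x ∂μ = 0 := by
  have : IsAddTorsionFree E := .of_isTorsionFree ℝ E
  rw [← self_eq_neg]
  calc ∫ x, f x ∂μ = ∫ x, f (-x) ∂μ := (integral_neg_eq_self f μ).symm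
    _ = -∫ x, f x ∂μ := by simp only [hf.eq, integral_neg]

lemma setIntegral_Icc_eq_integral_sin_smul_cos {r : ℝ} (hr : 0 ≤ r) (f : ℝ → E) :
    ∫ x in Icc (-r) r, f x = ∫ t in 0..π, (r * sin t) • f (r * cos t) := by
  have hasDerivAt_mul_cos :
      ∀ t ∈ Ioo 0 π, HasDerivAt (fun t ↦ r * cos t) (-(r * sin t)) t := fun t _ ↦ by
    simpa only [mul_neg] using (hasDerivAt_cos t).const_mul r
  have deriv_nonpos : ∀ t ∈ Ioo 0 π, -(r * sin t) ≤ 0 := fun t ht ↦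
    neg_nonpos.mpr (mul_nonneg hr (sin_pos_of_mem_Ioo ht).le)
  have substitution := integral_Icc_deriv_smul_of_deriv_nonpos (g := f) (by fun_prop)
    hasDerivAt_mul_cos deriv_nonpos pi_nonneg
  simp only [neg_smul, integral_neg, neg_inj, cos_zero, cos_pi, mul_neg, mul_one] at substitution
  rw [intervalIntegral.integral_of_le pi_nonneg, ← integral_Icc_eq_integral_Ioc, substitution]

end Integration

section Semicircle

variable {E : Type*} [NormedAddCommGroup E] [NormedSpace ℝ E] {v : ℝ}

lemma integral_semicircle_s8 (hv : 0 ≤ v) (f : ℝ → E) :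
    ∫ x, f x ∂(semicircle v) = ∫ x, (√(4 * v - x ^ 2) / (2 * π * v)) • f x := by
  rw [semicircle, integral_withDensity_eq_integral_toReal_smul (by fun_prop) (by simp)]
  congr with x
  rw [ENNReal.toReal_ofReal (by positivity)]

lemma integral_semicircle_eq_zero_of_odd (hv : 0 ≤ v) {f : ℝ → E} (hf : f.Odd) :
    ∫ x, f x ∂(semicircle v) = 0 := by
  rw [integral_semicircle_s8 hv]
  exact integral_eq_zero_of_odd (Function.Even.smul_odd (fun x ↦ by simp only [neg_sq]) hf)

lemma sqrt_four_mul_sub_sq_eq_zero_of_notMem_Icc {x : ℝ} (hx : x ∉ Icc (-(2 * √v)) (2 * √v)) :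
    √(4 * v - x ^ 2) = 0 := by
  contrapose! hx
  have sq_le : x ^ 2 ≤ 4 * v := sub_nonneg.mp (sqrt_ne_zero'.mp hx).le
  have two_mul_sqrt : √(4 * v) = 2 * √v := by
    rw [sqrt_mul (by norm_num), show (4 : ℝ) = 2 ^ 2 by norm_num, sqrt_sq (by norm_num)]
  exact abs_le.mp (two_mul_sqrt ▸ abs_le_sqrt sq_le)

lemma sqrt_four_mul_sub_sq_mul_cos (hv : 0 ≤ v) {t : ℝ} (ht : t ∈ Icc 0 π) :
    √(4 * v - (2 * √v * cos t) ^ 2) = 2 * √v * sin t := by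
  have sin_nonneg : 0 ≤ sin t := sin_nonneg_of_mem_Icc ht
  have sub_sq_eq_sq : 4 * v - (2 * √v * cos t) ^ 2 = (2 * √v * sin t) ^ 2 := by
    simp only [mul_pow, sq_sqrt hv, sin_sq]
    ring
  rw [sub_sq_eq_sq, sqrt_sq (by positivity)]

lemma integral_semicircle_eq_integral_sin_sq (hv : 0 < v) (f : ℝ → E) :
    ∫ x, f x ∂(semicircle v) = ∫ t in 0..π, (2 / π * sin t ^ 2) • f (2 * √v * cos t) := by
  have integrand_eq_zero : ∀ x ∉ Icc (-(2 * √v)) (2 * √v),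
      (√(4 * v - x ^ 2) / (2 * π * v)) • f x = 0 := fun x hx ↦ by
    rw [sqrt_four_mul_sub_sq_eq_zero_of_notMem_Icc hx, zero_div, zero_smul]
  rw [integral_semicircle_s8 hv.le,
    ← setIntegral_eq_integral_of_forall_compl_eq_zero integrand_eq_zero,
    setIntegral_Icc_eq_integral_sin_smul_cos (by positivity)]
  refine intervalIntegral.integral_congr fun t ht ↦ ?_
  rw [uIcc_of_le pi_nonneg] at ht
  have jacobian_mul_density :
      2 * √v * sin t * (2 * √v * sin t / (2 * π * v)) = 2 / π * sin t ^ 2 := by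
    field_simp
    rw [sq_sqrt hv.le, mul_comm]
  simp only [sqrt_four_mul_sub_sq_mul_cos hv.le ht, smul_smul, jacobian_mul_density]

lemma integral_pow_odd_semicircle (hv : 0 ≤ v) {n : ℕ} (hn : Odd n) :
    ∫ x, x ^ n ∂(semicircle v) = 0 :=
  integral_semicircle_eq_zero_of_odd hv fun _ ↦ hn.neg_pow _

lemma integral_pow_even_semicircle (hv : 0 < v) (m : ℕ) :
    ∫ x, x ^ (2 * m) ∂(semicircle v) = catalan m * v ^ m := by
  calc ∫ x, x ^ (2 * m) ∂(semicircle v)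
      = ∫ t in 0..π, 2 / π * (4 * v) ^ m * (cos t ^ (2 * m) * sin t ^ 2) := by
        rw [integral_semicircle_eq_integral_sin_sq hv]
        congr with t
        rw [smul_eq_mul, mul_pow, pow_mul (2 * √v), mul_pow 2, sq_sqrt hv.le]
        ring
    _ = 2 / π * (4 * v) ^ m * (π * catalan m / (2 * 4 ^ m)) := by
        rw [intervalIntegral.integral_const_mul, integral_cos_pow_even_mul_sin_sq_zero_pi]
    _ = catalan m * v ^ m := by
        rw [mul_pow]
        field_simp

end Semicircle

theorem semicircle_moments (σ : ℝ) (hσ : 0 < σ) :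
    (∀ m : ℕ, ∫ x, x ^ (2 * m + 1) ∂(semicircle (σ ^ 2)) = 0) ∧
      (∀ m : ℕ, ∫ x, x ^ (2 * m) ∂(semicircle (σ ^ 2)) = (catalan m : ℝ) * σ ^ (2 * m)) := by
  refine ⟨fun m ↦ integral_pow_odd_semicircle (sq_nonneg σ) (odd_two_mul_add_one m), fun m ↦ ?_⟩
  rw [integral_pow_even_semicircle (pow_pos hσ 2), ← pow_mul]
end
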